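/- Let (G=(V,E),(J_v),(O_v),(T_{vu})) be a simple GIFS with V and E finite and G strongly connected, satisfying the strong separation condition (G.6)_S and the inverse bounded distortion condition (G.7)_{BI}. Then there exists a constant c > 0 such that for every κ ∈ (0,1), every k ≥ 2, every path w = w₁⋯w_k in G, every z ∈ J_{w_k}, and every x ∈ T_w(K_{w_k}): K ∩ B(x, c·κ·∏_{i=1}^{k−1} ‖T′_{w_iw_{i+1}}(T_{w_{i+1}⋯w_k}(z))‖_i) ⊆ T_w(K_{w_k}), where B(x,ρ) is the open ball of radius ρ. -/

import Mathlib

/-!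
The idea: two points of `K` whose codes differ in the first edge are at distance at least some
`δ > 0`, and composing with the contractions along a path shrinks this gap by at most a constant
times the product of the `‖T'‖_i`.

In detail, let `x ∈ T_w(K_{w_k})` and `y ∈ K` outside this set. Then the code of `y` departs from
`w` at some first edge, with index `m`, so that `x = F x'`, `y = F y'` for the composition `F` of
the first `m` maps along `w`, where the codes of `x'`, `y'` have different first edges.

* The code space is compact and `π` is continuous, so strong separation yields a uniform `δ` with
  `δ ≤ dist x' y'` (`SGIFS.exists_separation`).
* The sets `O_v` are connected, so maps with derivative at most `s` on `O_v` have oscillation at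
  most `s L` on a compact neighbourhood of `J_v` (`exists_oscillation_bound`). Hence orbits along a
  path approach each other geometrically even though `O_v` need not be convex, and the distortion
  condition bounds the product of the `‖T'‖_i` at one point by `C` times the product at another
  (`SGIFS.PathOn.iprod_le_prod_mul`, `SGIFS.prod_one_add_le_exp`).
* Therefore `F'` expands vectors by at least `C⁻¹ ∏ ‖T'‖_i` on a ball of radius `ρ ≤ δ` about `x'`.
  As `F` is injective and `y'` lies outside that ball, following the segment `[F x', F y']` up to
  its exit from the image of the ball gives `dist x y ≥ C⁻¹ ρ ∏ ‖T'‖_i` (`le_dist_of_expanding`).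

The edges of `w` beyond the index `m` only decrease the product, so `c = ρ / C` works.
-/

open scoped ENNReal NNReal Topology
open Filter Set Metric

noncomputable section

/-- The shift transformation on one-sided sequences. -/
def shift {S : Type*} (ω : ℕ → S) : ℕ → S := fun n => ω (n + 1)

/-- The topological Markov shift with transition `A`. -/
def TMS {S : Type*} (A : S → S → Prop) : Set (ℕ → S) := {ω | ∀ n, A (ω n) (ω (n + 1))}

/-- The cylinder set of a word `w` inside the TMS with transition `A`. -/
def cylSet {S : Type*} (A : S → S → Prop) (n : ℕ) (w : Fin n → S) : Set (ℕ → S) :=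
  {ω | ω ∈ TMS A ∧ ∀ i : Fin n, ω i = w i}

/-- Birkhoff sum `S_n f`. -/
def birkhoff {S : Type*} (f : (ℕ → S) → ℝ) (n : ℕ) (ω : ℕ → S) : ℝ :=
  ∑ i ∈ Finset.range n, f (shift^[i] ω)

/-- Partition function `Z_n(f) = Σ_w sup_{ω ∈ [w]} exp (S_n f ω)`
(the supremum of `exp` coincides with `exp` of the supremum; empty cylinders contribute `0`). -/
def pressureZ {S : Type*} (A : S → S → Prop) (f : (ℕ → S) → ℝ) (n : ℕ) : ℝ≥0∞ :=
  ∑' w : Fin n → S, ⨆ ω ∈ cylSet A n w, ENNReal.ofReal (Real.exp (birkhoff f n ω))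

/-- Logarithm `ℝ≥0∞ → EReal`, with `log 0 = ⊥` and `log ⊤ = ⊤`. -/
def elog (x : ℝ≥0∞) : EReal :=
  if x = 0 then ⊥ else if x = ⊤ then ⊤ else ((Real.log x.toReal : ℝ) : EReal)

/-- The topological pressure `P(f) = lim (1/n) log Z_n(f)` (as a limsup, which equals the
limit whenever the limit exists). -/
def pressure {S : Type*} (A : S → S → Prop) (f : (ℕ → S) → ℝ) : EReal :=
  Filter.limsup (fun n : ℕ => ((n : ℝ)⁻¹ : EReal) * elog (pressureZ A f n)) Filter.atTop

/-- A potential is summable if `Σ_s exp (sup_{[s]} f) < ∞`. -/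
def SummablePot {S : Type*} (A : S → S → Prop) (f : (ℕ → S) → ℝ) : Prop :=
  pressureZ A f 1 ≠ ⊤

/-- There is an `A`-admissible word of length `≥ 2` from `a` to `b`. -/
def Chain {S : Type*} (A : S → S → Prop) (a b : S) : Prop :=
  ∃ (m : ℕ) (w : ℕ → S), 1 ≤ m ∧ w 0 = a ∧ w m = b ∧ ∀ i < m, A (w i) (w (i + 1))

/-- Restriction of a transition matrix to a set of states. -/
def restrictT {S : Type*} (A : S → S → Prop) (C : Set S) : S → S → Prop :=
  fun i j => A i j ∧ i ∈ C ∧ j ∈ C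

/-- The communication class (the class of `a` under `↔`). -/
def commClass {S : Type*} (A : S → S → Prop) (a : S) : Set S :=
  {b | a = b ∨ (Chain A a b ∧ Chain A b a)}

end
noncomputable section

/-- The ambient Euclidean space `ℝ^D`. -/
abbrev Pt (D : ℕ) := EuclideanSpace ℝ (Fin D)

/-- `‖A‖_i = ‖A⁻¹‖⁻¹` for an invertible continuous linear map (junk value otherwise). -/
def inorm {D : ℕ} (A : Pt D →L[ℝ] Pt D) : ℝ := ‖Ring.inverse A‖⁻¹

/-- A simple graph-directed iterated function system (GIFS) in `ℝ^D` on the vertex set `V`,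
with edge relation `E`, seed sets `J`, open sets `O` and contractions `T`. -/
structure SGIFS (D : ℕ) (V : Type*) where
  E : V → V → Prop
  J : V → Set (Pt D)
  O : V → Set (Pt D)
  T : V → V → Pt D → Pt D
  r : ℝ
  hr : r < 1
  J_cpt : ∀ v, IsCompact (J v)
  J_conn : ∀ v, IsConnected (J v)
  J_reg : ∀ v, J v = closure (interior (J v))
  J_diam : ∃ c : ℝ, ∀ v, Metric.diam (J v) ≤ c
  O_open : ∀ v, IsOpen (O v)
  O_bdd : ∀ v, Bornology.IsBounded (O v)
  O_conn : ∀ v, IsConnected (O v)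
  hJO : ∃ c > 0, ∀ v, ∀ x ∈ J v, ∀ y ∉ O v, c ≤ dist x y
  T_diff : ∀ ⦃v u⦄, E v u → ContDiffOn ℝ 1 (T v u) (O u)
  T_inj : ∀ ⦃v u⦄, E v u → Set.InjOn (T v u) (O u)
  T_openim : ∀ ⦃v u⦄, E v u → IsOpen (T v u '' O u)
  T_sub : ∀ ⦃v u⦄, E v u → T v u '' O u ⊆ O v
  T_J : ∀ ⦃v u⦄, E v u → T v u '' J u ⊆ J v
  T_unit : ∀ ⦃v u⦄, E v u → ∀ x ∈ O u, IsUnit (fderiv ℝ (T v u) x)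
  T_contr : ∀ ⦃v u⦄, E v u → ∀ x ∈ O u, ‖fderiv ℝ (T v u) x‖ ≤ r

/-- Composition `T_{ω₀ω₁} ∘ ⋯ ∘ T_{ω_{k-1}ω_k}` along a sequence (identity for `k = 0`). -/
def vcomp {D : ℕ} {V : Type*} (T : V → V → Pt D → Pt D) (ω : ℕ → V) : ℕ → Pt D → Pt D
  | 0 => id
  | k + 1 => vcomp T ω k ∘ T (ω k) (ω (k + 1))

/-- `π` is the coding map of the simple system `(Ed, J, T)`:
`{π ω} = ⋂_{k ≥ 1} T_{ω₀ω₁} ∘ ⋯ ∘ T_{ω_{k-1}ω_k} (J_{ω_k})`. -/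
def IsCodingMap {D : ℕ} {V : Type*} (Ed : V → V → Prop) (J : V → Set (Pt D))
    (T : V → V → Pt D → Pt D) (π : (ℕ → V) → Pt D) : Prop :=
  ∀ ω ∈ {ω : ℕ → V | ∀ n, Ed (ω n) (ω (n + 1))},
    (⋂ k : ℕ, vcomp T ω (k + 1) '' J (ω (k + 1))) = {π ω}

/-- `pcomp T w j m = T_{w_j w_{j+1}} ∘ ⋯ ∘ T_{w_{j+m-1} w_{j+m}}` (identity for `m = 0`). -/
def pcomp {D : ℕ} {V : Type*} (T : V → V → Pt D → Pt D) (w : ℕ → V) : ℕ → ℕ → Pt D → Pt D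
  | _, 0 => id
  | j, m + 1 => T (w j) (w (j + 1)) ∘ pcomp T w (j + 1) m

/-- The potential `φ(ω) = log ‖T'_{ω₀ω₁}(π(σω))‖`. -/
def phiU {D : ℕ} {V : Type*} (T : V → V → Pt D → Pt D) (π : (ℕ → V) → Pt D)
    (ω : ℕ → V) : ℝ :=
  Real.log ‖fderiv ℝ (T (ω 0) (ω 1)) (π (fun n => ω (n + 1)))‖

/-- The potential `φ̲(ω) = log ‖T'_{ω₀ω₁}(π(σω))‖_i`. -/
def phiL {D : ℕ} {V : Type*} (T : V → V → Pt D → Pt D) (π : (ℕ → V) → Pt D)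
    (ω : ℕ → V) : ℝ :=
  Real.log (inorm (fderiv ℝ (T (ω 0) (ω 1)) (π (fun n => ω (n + 1)))))

/-- Conformality condition `(G.5)_C`. -/
def CondConf {D : ℕ} {V : Type*} (Ed : V → V → Prop) (O : V → Set (Pt D))
    (T : V → V → Pt D → Pt D) : Prop :=
  ∀ ⦃v u⦄, Ed v u → ∀ x ∈ O u, IsConformalMap (fderiv ℝ (T v u) x)

/-- Strong separation condition `(G.6)_S` relative to a limit set `K`. -/
def CondSSC {D : ℕ} {V : Type*} (Ed : V → V → Prop) (J : V → Set (Pt D))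
    (T : V → V → Pt D → Pt D) (K : Set (Pt D)) : Prop :=
  ∀ ⦃v u v' u'⦄, Ed v u → Ed v' u' → (v, u) ≠ (v', u') →
    (T v u '' (J u ∩ K)) ∩ (T v' u' '' (J u' ∩ K)) = ∅

/-- Open set condition `(G.6)_O`. -/
def CondOSC {D : ℕ} {V : Type*} (Ed : V → V → Prop) (J : V → Set (Pt D))
    (T : V → V → Pt D → Pt D) : Prop :=
  ∀ ⦃v u v' u'⦄, Ed v u → Ed v' u' → (v, u) ≠ (v', u') →
    (T v u '' interior (J u)) ∩ (T v' u' '' interior (J u')) = ∅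

/-- Bounded distortion `(G.7)_B`. -/
def CondBD {D : ℕ} {V : Type*} (Ed : V → V → Prop) (O : V → Set (Pt D))
    (T : V → V → Pt D → Pt D) : Prop :=
  ∃ c > 0, ∃ β ∈ Set.Ioc (0 : ℝ) 1, ∀ ⦃v u⦄, Ed v u → ∀ x ∈ O u, ∀ y ∈ O u,
    |‖fderiv ℝ (T v u) x‖ - ‖fderiv ℝ (T v u) y‖| ≤
      c * ‖fderiv ℝ (T v u) x‖ * dist x y ^ β

/-- Bounded distortion for inverse maps `(G.7)_{BI}`. -/
def CondBDI {D : ℕ} {V : Type*} (Ed : V → V → Prop) (O : V → Set (Pt D))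
    (T : V → V → Pt D → Pt D) : Prop :=
  ∃ c > 0, ∃ β ∈ Set.Ioc (0 : ℝ) 1, ∀ ⦃v u⦄, Ed v u → ∀ x ∈ O u, ∀ y ∈ O u,
    |inorm (fderiv ℝ (T v u) x) - inorm (fderiv ℝ (T v u) y)| ≤
      c * inorm (fderiv ℝ (T v u) x) * dist x y ^ β

/-- Contractibility of the seed sets `(G.9)_J`. -/
def CondG9 {D : ℕ} {V : Type*} (Ed : V → V → Prop) (J : V → Set (Pt D))
    (T : V → V → Pt D → Pt D) : Prop :=
  ∃ c > 0, ∀ v, Metric.diam (J v) ≤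
    c * sSup {t : ℝ | ∃ u, Ed v u ∧ ∃ z ∈ J u, t = ‖fderiv ℝ (T v u) z‖}

/-- The summability interval `Ī^V` relative to the limit set `K`. -/
def IbarSet {D : ℕ} {V : Type*} (Ed : V → V → Prop) (J : V → Set (Pt D))
    (T : V → V → Pt D → Pt D) (K : Set (Pt D)) : Set ℝ :=
  {s | 0 ≤ s ∧
    (∑' v : V, ⨆ (u : V) (_ : Ed v u) (x : Pt D) (_ : x ∈ K ∩ J u),
      ENNReal.ofReal (inorm (fderiv ℝ (T v u) x) ^ s)) ≠ ⊤}

end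

noncomputable section

/-- Summability condition `(G.8)_{SV}`: some `s ∈ Ī^V` satisfies `P(s φ̲) = 0`. -/
def CondG8 {D : ℕ} {V : Type*} (Ed : V → V → Prop) (J : V → Set (Pt D))
    (T : V → V → Pt D → Pt D) (π : (ℕ → V) → Pt D) : Prop :=
  ∃ s ∈ IbarSet Ed J T (π '' TMS Ed), pressure Ed (fun ω => s * phiL T π ω) = 0

/-- A set of vertices is strongly connected (with edges restricted to it). -/
def SCOn {V : Type*} (Ed : V → V → Prop) (C : Set V) : Prop :=
  ∀ v ∈ C, ∀ u ∈ C, Chain (restrictT Ed C) v u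

/-- A strongly connected component: a maximal strongly connected set of vertices. -/
def IsSCC {V : Type*} (Ed : V → V → Prop) (C : Set V) : Prop :=
  SCOn Ed C ∧ ∀ C', C ⊆ C' → SCOn Ed C' → C' = C

end

/-! ### Two estimates for differentiable maps -/

/-- A connected open set is quasi-convex at large scale: on a compact subset, maps whose derivative
is bounded by `s` on the whole open set have oscillation at most `s * L`, with `L` independent of
the map. -/
theorem exists_oscillation_bound {D : ℕ} {U S : Set (Pt D)} (hU : IsOpen U)
    (hc : IsConnected U) (hS : IsCompact S) (hSU : S ⊆ U) :
    ∃ L : ℝ, 0 ≤ L ∧ ∀ (f : Pt D → Pt D) (s : ℝ), 0 ≤ s → (∀ p ∈ U, DifferentiableAt ℝ f p) →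
      (∀ p ∈ U, ‖fderiv ℝ f p‖ ≤ s) → ∀ p ∈ S, ∀ q ∈ S, dist (f p) (f q) ≤ s * L := by
  obtain ⟨a, ha⟩ := hc.nonempty
  -- Maps with derivative bounded by `s` are `s`-Lipschitz on each ball inside `U`.
  have hloc : ∀ x ∈ U, ∃ ε > 0, ball x ε ⊆ U ∧ ∀ (f : Pt D → Pt D) (s : ℝ), 0 ≤ s →
      (∀ p ∈ U, DifferentiableAt ℝ f p) → (∀ p ∈ U, ‖fderiv ℝ f p‖ ≤ s) →
      ∀ y ∈ ball x ε, dist (f x) (f y) ≤ s * ε := by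
    intro x hx
    obtain ⟨ε, hε, hb⟩ := Metric.isOpen_iff.1 hU x hx
    refine ⟨ε, hε, hb, fun f s hs hd hn y hy => ?_⟩
    have h := (convex_ball x ε).norm_image_sub_le_of_norm_fderiv_le (𝕜 := ℝ)
      (fun p hp => hd p (hb hp)) (fun p hp => hn p (hb hp)) (mem_ball_self hε) hy
    rw [dist_comm, dist_eq_norm]
    refine h.trans (mul_le_mul_of_nonneg_left ?_ hs)
    rw [← dist_eq_norm]
    exact (mem_ball.1 hy).le
  let P : Pt D → Pt D → Prop := fun x y => ∃ L : ℝ, ∀ (f : Pt D → Pt D) (s : ℝ), 0 ≤ s →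
    (∀ p ∈ U, DifferentiableAt ℝ f p) → (∀ p ∈ U, ‖fderiv ℝ f p‖ ≤ s) →
    dist (f x) (f y) ≤ s * L
  have hP : ∀ {x y}, x ∈ U → y ∈ U → P x y := by
    intro x y hx hy
    refine hc.isPreconnected.induction₂ P ?_ ?_ ?_ hx hy
    · intro x hx
      obtain ⟨ε, hε, -, h⟩ := hloc x hx
      filter_upwards [mem_nhdsWithin_of_mem_nhds (ball_mem_nhds x hε)] with y hy
      exact ⟨ε, fun f s hs hd hn => h f s hs hd hn y hy⟩
    · rintro x y z - - - ⟨L, hL⟩ ⟨M, hM⟩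
      refine ⟨L + M, fun f s hs hd hn => ?_⟩
      have h1 := hL f s hs hd hn
      have h2 := hM f s hs hd hn
      have h3 := dist_triangle (f x) (f y) (f z)
      rw [mul_add]
      linarith
    · rintro x y - - ⟨L, hL⟩
      exact ⟨L, fun f s hs hd hn => by rw [dist_comm]; exact hL f s hs hd hn⟩
  have hcomp : ∃ L : ℝ, ∀ (f : Pt D → Pt D) (s : ℝ), 0 ≤ s → (∀ p ∈ U, DifferentiableAt ℝ f p) →
      (∀ p ∈ U, ‖fderiv ℝ f p‖ ≤ s) → ∀ q ∈ S, dist (f a) (f q) ≤ s * L := by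
    refine hS.induction_on (p := fun S => ∃ L : ℝ, ∀ (f : Pt D → Pt D) (s : ℝ), 0 ≤ s →
      (∀ p ∈ U, DifferentiableAt ℝ f p) → (∀ p ∈ U, ‖fderiv ℝ f p‖ ≤ s) →
      ∀ q ∈ S, dist (f a) (f q) ≤ s * L) ⟨0, by simp⟩ ?_ ?_ ?_
    · rintro s t hst ⟨L, hL⟩
      exact ⟨L, fun f r hr hd hn q hq => hL f r hr hd hn q (hst hq)⟩
    · rintro s t ⟨L, hL⟩ ⟨M, hM⟩
      refine ⟨max L M, fun f r hr hd hn q hq => ?_⟩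
      rcases hq with hq | hq
      · exact (hL f r hr hd hn q hq).trans (mul_le_mul_of_nonneg_left (le_max_left _ _) hr)
      · exact (hM f r hr hd hn q hq).trans (mul_le_mul_of_nonneg_left (le_max_right _ _) hr)
    · intro x hx
      obtain ⟨ε, hε, -, h⟩ := hloc x (hSU hx)
      obtain ⟨L, hL⟩ := hP ha (hSU hx)
      refine ⟨ball x ε, mem_nhdsWithin_of_mem_nhds (ball_mem_nhds x hε), L + ε,
        fun f s hs hd hn q hq => ?_⟩
      have h1 := hL f s hs hd hn
      have h2 := h f s hs hd hn q hq
      have h3 := dist_triangle (f a) (f x) (f q)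
      rw [mul_add]
      linarith
  obtain ⟨L, hL⟩ := hcomp
  refine ⟨2 * max L 0, by positivity, fun f s hs hd hn p hp q hq => ?_⟩
  have h1 := hL f s hs hd hn p hp
  have h2 := hL f s hs hd hn q hq
  have h3 := dist_triangle_left (f p) (f q) (f a)
  have h4 : s * L ≤ s * max L 0 := mul_le_mul_of_nonneg_left (le_max_left _ _) hs
  linarith

/-- If an injective local diffeomorphism expands tangent vectors by at least `m` on the ball of
radius `ρ` about `a`, then it sends points outside this ball to distance at least `m * ρ` from
`f a`. The inverse map is `m⁻¹`-Lipschitz along the segment from `f a` to the first point at which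
the segment `[f a, f b]` leaves the image of the ball. -/
theorem le_dist_of_expanding {D : ℕ} {U : Set (Pt D)} {f : Pt D → Pt D} (hU : IsOpen U)
    (hf : ContDiffOn ℝ 1 f U) (hinj : InjOn f U) {a b : Pt D} {ρ m : ℝ} (hρ : 0 < ρ) (hm : 0 < m)
    (hball : closedBall a ρ ⊆ U) (hunit : ∀ p ∈ U, IsUnit (fderiv ℝ f p))
    (hexp : ∀ p ∈ closedBall a ρ, ∀ v, m * ‖v‖ ≤ ‖fderiv ℝ f p v‖)
    (hb : b ∈ U) (hab : ρ ≤ dist a b) : m * ρ ≤ dist (f a) (f b) := by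
  have hstrict : ∀ p ∈ U, ∃ e : Pt D ≃L[ℝ] Pt D, (e : Pt D →L[ℝ] Pt D) = fderiv ℝ f p ∧
      HasStrictFDerivAt f (e : Pt D →L[ℝ] Pt D) p := by
    intro p hp
    obtain ⟨u, hu⟩ := hunit p hp
    refine ⟨ContinuousLinearEquiv.ofUnit u, hu, ?_⟩
    have : ((ContinuousLinearEquiv.ofUnit u : Pt D ≃L[ℝ] Pt D) : Pt D →L[ℝ] Pt D)
      = fderiv ℝ f p := hu
    rw [this]
    exact (hf.contDiffAt (hU.mem_nhds hp)).hasStrictFDerivAt one_ne_zero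
  have hmap : ∀ p ∈ U, map f (𝓝 p) = 𝓝 (f p) := by
    intro p hp
    obtain ⟨e, -, he⟩ := hstrict p hp
    exact he.map_nhds_eq_of_equiv
  let g := Function.invFunOn f U
  have hgf : ∀ p ∈ U, g (f p) = p := fun p hp => hinj.leftInvOn_invFunOn hp
  have hg : ∀ p ∈ closedBall a ρ, ∃ g' : Pt D →L[ℝ] Pt D, HasFDerivAt g g' (f p) ∧
      ‖g'‖ ≤ m⁻¹ := by
    intro p hp
    have hpU := hball hp
    obtain ⟨e, hef, he⟩ := hstrict p hpU
    have hUn : ∀ᶠ q in 𝓝 p, g (f q) = q := by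
      filter_upwards [hU.mem_nhds hpU] with q hq using hgf q hq
    refine ⟨(e.symm : Pt D →L[ℝ] Pt D), ?_, ?_⟩
    · refine HasFDerivAt.of_local_left_inverse (f := f) (f' := e) ?_ ?_ ?_
      · rw [ContinuousAt, hgf p hpU, ← hmap p hpU, tendsto_map'_iff]
        exact tendsto_id.congr' (hUn.mono fun q hq => hq.symm)
      · rw [hgf p hpU]
        exact he.hasFDerivAt
      · rw [← hmap p hpU, eventually_map]
        exact hUn.mono fun q hq => by rw [hq]
    · refine ContinuousLinearMap.opNorm_le_bound _ (by positivity) fun v => ?_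
      have := hexp p hp (e.symm v)
      rw [← hef] at this
      simp only [ContinuousLinearEquiv.coe_coe, ContinuousLinearEquiv.apply_symm_apply] at this ⊢
      rw [inv_mul_eq_div, le_div_iff₀ hm]
      linarith
  have hopen : IsOpen (f '' ball a ρ) := by
    rw [isOpen_iff_mem_nhds]
    rintro _ ⟨p, hp, rfl⟩
    rw [← hmap p (hball (ball_subset_closedBall hp))]
    exact image_mem_map (isOpen_ball.mem_nhds hp)
  have hcl : IsClosed (f '' closedBall a ρ) :=
    ((isCompact_closedBall a ρ).image_of_continuousOn (hf.continuousOn.mono hball)).isClosed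
  let γ : ℝ → Pt D := fun t => f a + t • (f b - f a)
  have hγ : Continuous γ := by fun_prop
  have hfb : f b ∉ f '' ball a ρ := by
    rintro ⟨p, hp, hpb⟩
    have := hinj (hball (ball_subset_closedBall hp)) hb hpb
    subst this
    rw [mem_ball, dist_comm] at hp
    linarith
  obtain ⟨t, ⟨⟨ht0, ht1⟩, htS⟩, htmin⟩ : ∃ t, IsLeast (Icc 0 1 ∩ γ ⁻¹' (f '' ball a ρ)ᶜ) t :=
    (isCompact_Icc.inter_right (hopen.isClosed_compl.preimage hγ)).exists_isLeast
      ⟨1, ⟨zero_le_one, le_rfl⟩, by simpa [γ] using hfb⟩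
  have hlt : ∀ s, 0 ≤ s → s < t → γ s ∈ f '' ball a ρ := by
    intro s hs0 hst
    by_contra hcon
    exact absurd (htmin ⟨⟨hs0, by linarith⟩, hcon⟩) (not_le.2 hst)
  have htpos : 0 < t := by
    rcases ht0.lt_or_eq with h | h
    · exact h
    · exfalso
      apply htS
      rw [← h]
      exact ⟨a, mem_ball_self hρ, by simp [γ]⟩
  have hle : ∀ s ∈ Icc 0 t, γ s ∈ f '' closedBall a ρ := by
    have h1 : Icc 0 t ⊆ closure (Ico 0 t) := by rw [closure_Ico htpos.ne]
    have h2 : closure (Ico 0 t) ⊆ γ ⁻¹' (f '' closedBall a ρ) :=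
      closure_minimal (fun s hs => image_mono ball_subset_closedBall (hlt s hs.1 hs.2))
        (hcl.preimage hγ)
    exact fun s hs => h2 (h1 hs)
  obtain ⟨q, hq, hqt⟩ := hle t ⟨ht0, le_rfl⟩
  have hqa : ρ ≤ ‖q - a‖ := by
    by_contra hcon
    exact htS ⟨q, by rw [mem_ball, dist_eq_norm]; exact not_le.1 hcon, hqt⟩
  have hseg : ∀ y ∈ segment ℝ (f a) (γ t), y ∈ f '' closedBall a ρ := by
    rw [segment_eq_image']
    rintro _ ⟨s, ⟨hs0, hs1⟩, rfl⟩
    have := hle (s * t) ⟨by positivity, by nlinarith⟩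
    simpa [γ, smul_smul] using this
  have hmv : ‖g (γ t) - g (f a)‖ ≤ m⁻¹ * ‖γ t - f a‖ := by
    have hder : ∀ y ∈ segment ℝ (f a) (γ t), HasFDerivAt g (fderiv ℝ g y) y ∧
        ‖fderiv ℝ g y‖ ≤ m⁻¹ := by
      intro y hy
      obtain ⟨p, hp, rfl⟩ := hseg y hy
      obtain ⟨g', h1, h2⟩ := hg p hp
      rw [h1.fderiv]
      exact ⟨h1, h2⟩
    exact (convex_segment _ _).norm_image_sub_le_of_norm_hasFDerivWithin_le
      (fun y hy => (hder y hy).1.hasFDerivWithinAt) (fun y hy => (hder y hy).2)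
      (left_mem_segment _ _ _) (right_mem_segment _ _ _)
  rw [← hqt, hgf q (hball hq), hgf a (hball (mem_closedBall_self hρ.le)), hqt] at hmv
  have h5 : ‖γ t - f a‖ ≤ dist (f a) (f b) := by
    simp only [γ, add_sub_cancel_left, norm_smul, Real.norm_eq_abs, abs_of_nonneg ht0]
    rw [dist_comm, dist_eq_norm]
    exact mul_le_of_le_one_left (norm_nonneg _) ht1
  have h6 : ρ ≤ m⁻¹ * dist (f a) (f b) :=
    hqa.trans (hmv.trans (mul_le_mul_of_nonneg_left h5 (by positivity)))
  rw [inv_mul_eq_div, le_div_iff₀ hm] at h6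
  linarith

/-! ### The quantity `‖·‖_i` -/

theorem inorm_mul_norm_le {D : ℕ} {A : Pt D →L[ℝ] Pt D} (hA : IsUnit A) (v : Pt D) :
    inorm A * ‖v‖ ≤ ‖A v‖ := by
  have h : Ring.inverse A (A v) = v := by
    have := congrArg (fun B : Pt D →L[ℝ] Pt D => B v) (Ring.inverse_mul_cancel A hA)
    simpa using this
  have h2 : ‖v‖ ≤ ‖Ring.inverse A‖ * ‖A v‖ := by
    conv_lhs => rw [← h]
    exact ContinuousLinearMap.le_opNorm _ _
  unfold inorm
  rcases (norm_nonneg (Ring.inverse A)).eq_or_lt with h0 | h0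
  · rw [← h0]
    simp
  · rw [inv_mul_eq_div, div_le_iff₀ h0]
    linarith

theorem inorm_nonneg {D : ℕ} (A : Pt D →L[ℝ] Pt D) : 0 ≤ inorm A :=
  inv_nonneg.2 (norm_nonneg _)

theorem inorm_pos {D : ℕ} [Nontrivial (Pt D)] {A : Pt D →L[ℝ] Pt D} (hA : IsUnit A) :
    0 < inorm A := by
  refine inv_pos.2 (norm_pos_iff.2 fun h => ?_)
  have := Ring.inverse_mul_cancel A hA
  rw [h, zero_mul] at this
  exact zero_ne_one this

theorem inorm_le_norm {D : ℕ} [Nontrivial (Pt D)] {A : Pt D →L[ℝ] Pt D} (hA : IsUnit A) :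
    inorm A ≤ ‖A‖ := by
  obtain ⟨v, hv⟩ := exists_ne (0 : Pt D)
  have h := (inorm_mul_norm_le hA v).trans (A.le_opNorm v)
  exact le_of_mul_le_mul_right h (norm_pos_iff.2 hv)

/-! ### Compositions along a path -/

theorem pcomp_add {D : ℕ} {V : Type*} (T : V → V → Pt D → Pt D) (w : ℕ → V) (m n : ℕ) :
    ∀ (j : ℕ) (p : Pt D), pcomp T w j (m + n) p = pcomp T w j m (pcomp T w (j + m) n p) := by
  induction m with
  | zero => intro j p; simp [pcomp]
  | succ m ih =>
    intro j p
    rw [show m + 1 + n = m + n + 1 by omega, show j + (m + 1) = j + 1 + m by omega]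
    simp only [pcomp, Function.comp_apply, ih]

theorem pcomp_congr {D : ℕ} {V : Type*} (T : V → V → Pt D → Pt D) {w w' : ℕ → V} (m : ℕ) :
    ∀ {j j' : ℕ}, (∀ i < m, w (j + i) = w' (j' + i) ∧ w (j + i + 1) = w' (j' + i + 1)) →
      pcomp T w j m = pcomp T w' j' m := by
  induction m with
  | zero => intro j j' _; rfl
  | succ m ih =>
    intro j j' h
    have h0 := h 0 (by omega)
    simp only [add_zero] at h0
    simp only [pcomp]
    rw [h0.1, h0.2, ih (j := j + 1) (j' := j' + 1)]
    intro i hi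
    have := h (i + 1) (by omega)
    rwa [show j + 1 + i = j + (i + 1) by omega, show j' + 1 + i = j' + (i + 1) by omega]

theorem vcomp_eq_pcomp {D : ℕ} {V : Type*} (T : V → V → Pt D → Pt D) (w : ℕ → V) (k : ℕ) :
    vcomp T w k = pcomp T w 0 k := by
  induction k with
  | zero => rfl
  | succ k ih =>
    funext p
    rw [pcomp_add T w k 1 0 p, vcomp, ih]
    simp [pcomp]

/-- The product `∏ ‖T'‖_i` along the path `w_j, …, w_{j+m}`, evaluated on the orbit of `z`. -/
noncomputable def iprod {D : ℕ} {V : Type*} (T : V → V → Pt D → Pt D) (w : ℕ → V) : ℕ → ℕ → Pt D → ℝ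
  | _, 0, _ => 1
  | j, m + 1, z => inorm (fderiv ℝ (T (w j) (w (j + 1))) (pcomp T w (j + 1) m z)) *
      iprod T w (j + 1) m z

theorem prod_eq_iprod {D : ℕ} {V : Type*} (T : V → V → Pt D → Pt D) (w : ℕ → V) (z : Pt D)
    (m : ℕ) : ∀ j : ℕ, ∏ i ∈ Finset.range m, inorm (fderiv ℝ (T (w (j + i)) (w (j + i + 1)))
      (pcomp T w (j + i + 1) (m - (i + 1)) z)) = iprod T w j m z := by
  induction m with
  | zero => intro j; simp [iprod]
  | succ m ih =>
    intro j
    rw [Finset.prod_range_succ', iprod, ← ih (j + 1), mul_comm]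
    congr 1
    refine Finset.prod_congr rfl fun i _ => ?_
    rw [show j + 1 + i = j + (i + 1) by omega, Nat.add_sub_add_right]

theorem iprod_add {D : ℕ} {V : Type*} (T : V → V → Pt D → Pt D) (w : ℕ → V) (z : Pt D)
    (m n : ℕ) : ∀ j : ℕ,
      iprod T w j (m + n) z = iprod T w j m (pcomp T w (j + m) n z) * iprod T w (j + m) n z := by
  induction m with
  | zero => intro j; simp [iprod]
  | succ m ih =>
    intro j
    rw [show m + 1 + n = m + n + 1 by omega, show j + (m + 1) = j + 1 + m by omega]
    simp only [iprod, ih, pcomp_add]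
    ring

namespace SGIFS

variable {D : ℕ} {V : Type*} (G : SGIFS D V)

/-- The vertices `w_j, …, w_{j+m}` form a path of the graph. -/
def PathOn (w : ℕ → V) (j m : ℕ) : Prop := ∀ i < m, G.E (w (j + i)) (w (j + i + 1))

variable {G}

theorem PathOn.head {w : ℕ → V} {j m : ℕ} (h : G.PathOn w j (m + 1)) :
    G.E (w j) (w (j + 1)) := h 0 (by omega)

theorem PathOn.tail {w : ℕ → V} {j m : ℕ} (h : G.PathOn w j (m + 1)) :
    G.PathOn w (j + 1) m := by
  intro i hi
  have := h (i + 1) (by omega)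
  rwa [show j + 1 + i = j + (i + 1) by omega]

theorem J_subset_O (v : V) : G.J v ⊆ G.O v := by
  obtain ⟨c, hc, h⟩ := G.hJO
  intro x hx
  by_contra hcon
  have := h v x hx x hcon
  rw [dist_self] at this
  linarith

theorem PathOn.mapsTo_J {w : ℕ → V} {m : ℕ} : ∀ {j : ℕ}, G.PathOn w j m →
    MapsTo (pcomp G.T w j m) (G.J (w (j + m))) (G.J (w j)) := by
  induction m with
  | zero => intro j _ x hx; exact hx
  | succ m ih =>
    intro j h x hx
    rw [show j + (m + 1) = j + 1 + m by omega] at hx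
    exact G.T_J h.head ⟨_, ih h.tail hx, rfl⟩

theorem PathOn.mapsTo_O {w : ℕ → V} {m : ℕ} : ∀ {j : ℕ}, G.PathOn w j m →
    MapsTo (pcomp G.T w j m) (G.O (w (j + m))) (G.O (w j)) := by
  induction m with
  | zero => intro j _ x hx; exact hx
  | succ m ih =>
    intro j h x hx
    rw [show j + (m + 1) = j + 1 + m by omega] at hx
    exact G.T_sub h.head ⟨_, ih h.tail hx, rfl⟩

theorem PathOn.injOn {w : ℕ → V} {m : ℕ} : ∀ {j : ℕ}, G.PathOn w j m →
    InjOn (pcomp G.T w j m) (G.O (w (j + m))) := by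
  induction m with
  | zero => intro j _; exact injOn_id _
  | succ m ih =>
    intro j h
    rw [show j + (m + 1) = j + 1 + m by omega]
    exact (G.T_inj h.head).comp (ih h.tail) h.tail.mapsTo_O

theorem PathOn.contDiffOn {w : ℕ → V} {m : ℕ} : ∀ {j : ℕ}, G.PathOn w j m →
    ContDiffOn ℝ 1 (pcomp G.T w j m) (G.O (w (j + m))) := by
  induction m with
  | zero => intro j _; exact contDiffOn_id
  | succ m ih =>
    intro j h
    rw [show j + (m + 1) = j + 1 + m by omega]
    exact (G.T_diff h.head).comp (ih h.tail) h.tail.mapsTo_O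

theorem PathOn.differentiableAt {w : ℕ → V} {j m : ℕ} (h : G.PathOn w j m) {p : Pt D}
    (hp : p ∈ G.O (w (j + m))) : DifferentiableAt ℝ (pcomp G.T w j m) p :=
  (h.contDiffOn.contDiffAt ((G.O_open _).mem_nhds hp)).differentiableAt one_ne_zero

theorem PathOn.fderiv_succ {w : ℕ → V} {j m : ℕ} (h : G.PathOn w j (m + 1)) {p : Pt D}
    (hp : p ∈ G.O (w (j + (m + 1)))) : fderiv ℝ (pcomp G.T w j (m + 1)) p =
      fderiv ℝ (G.T (w j) (w (j + 1))) (pcomp G.T w (j + 1) m p) *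
        fderiv ℝ (pcomp G.T w (j + 1) m) p := by
  rw [show j + (m + 1) = j + 1 + m by omega] at hp
  exact fderiv_comp p (((G.T_diff h.head).contDiffAt
    ((G.O_open _).mem_nhds (h.tail.mapsTo_O hp))).differentiableAt one_ne_zero)
    (h.tail.differentiableAt hp)

theorem PathOn.isUnit_fderiv {w : ℕ → V} {m : ℕ} : ∀ {j : ℕ}, G.PathOn w j m →
    ∀ p ∈ G.O (w (j + m)), IsUnit (fderiv ℝ (pcomp G.T w j m) p) := by
  induction m with
  | zero =>
    intro j _ p _
    simp only [pcomp, fderiv_id]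
    exact isUnit_one
  | succ m ih =>
    intro j h p hp
    rw [h.fderiv_succ hp]
    rw [show j + (m + 1) = j + 1 + m by omega] at hp
    exact (G.T_unit h.head _ (h.tail.mapsTo_O hp)).mul (ih h.tail p hp)

theorem PathOn.norm_fderiv_le {R : ℝ} (hR0 : 0 ≤ R) (hR : G.r ≤ R) {w : ℕ → V} {m : ℕ} :
    ∀ {j : ℕ}, G.PathOn w j m →
      ∀ p ∈ G.O (w (j + m)), ‖fderiv ℝ (pcomp G.T w j m) p‖ ≤ R ^ m := by
  induction m with
  | zero =>
    intro j _ p _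
    simp only [pcomp, fderiv_id, pow_zero]
    exact ContinuousLinearMap.norm_id_le
  | succ m ih =>
    intro j h p hp
    rw [h.fderiv_succ hp]
    rw [show j + (m + 1) = j + 1 + m by omega] at hp
    refine (norm_mul_le _ _).trans ?_
    rw [pow_succ']
    exact mul_le_mul ((G.T_contr h.head _ (h.tail.mapsTo_O hp)).trans hR) (ih h.tail p hp)
      (norm_nonneg _) hR0

theorem PathOn.iprod_mul_norm_le {w : ℕ → V} {m : ℕ} : ∀ {j : ℕ}, G.PathOn w j m →
    ∀ p ∈ G.O (w (j + m)), ∀ v,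
      iprod G.T w j m p * ‖v‖ ≤ ‖fderiv ℝ (pcomp G.T w j m) p v‖ := by
  induction m with
  | zero =>
    intro j _ p _ v
    simp [pcomp, iprod]
  | succ m ih =>
    intro j h p hp v
    rw [h.fderiv_succ hp, iprod, mul_assoc]
    rw [show j + (m + 1) = j + 1 + m by omega] at hp
    exact (mul_le_mul_of_nonneg_left (ih h.tail p hp v) (inorm_nonneg _)).trans
      (inorm_mul_norm_le (G.T_unit h.head _ (h.tail.mapsTo_O hp)) _)

theorem PathOn.iprod_pos [Nontrivial (Pt D)] {w : ℕ → V} {m : ℕ} : ∀ {j : ℕ}, G.PathOn w j m →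
    ∀ p ∈ G.O (w (j + m)), 0 < iprod G.T w j m p := by
  induction m with
  | zero => intro j _ p _; exact one_pos
  | succ m ih =>
    intro j h p hp
    rw [show j + (m + 1) = j + 1 + m by omega] at hp
    exact mul_pos (inorm_pos (G.T_unit h.head _ (h.tail.mapsTo_O hp))) (ih h.tail p hp)

theorem PathOn.iprod_le_one [Nontrivial (Pt D)] {w : ℕ → V} {m : ℕ} :
    ∀ {j : ℕ}, G.PathOn w j m → ∀ p ∈ G.O (w (j + m)), iprod G.T w j m p ≤ 1 := by
  induction m with
  | zero => intro j _ p _; exact le_rfl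
  | succ m ih =>
    intro j h p hp
    rw [show j + (m + 1) = j + 1 + m by omega] at hp
    have hO := h.tail.mapsTo_O hp
    refine mul_le_one₀ ?_ (h.tail.iprod_pos p hp).le (ih h.tail p hp)
    exact (inorm_le_norm (G.T_unit h.head _ hO)).trans
      ((G.T_contr h.head _ hO).trans G.hr.le)

variable (G)

/-- `L` bounds, uniformly in the vertex `v`, the oscillation on the `ρ`-neighbourhood of `J_v` of
every map with derivative at most `1` on `O_v` (stated with a scale factor `s`). -/
def OscBound (ρ L : ℝ) : Prop :=
  ∀ (v : V) (f : Pt D → Pt D) (s : ℝ), 0 ≤ s → (∀ p ∈ G.O v, DifferentiableAt ℝ f p) →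
    (∀ p ∈ G.O v, ‖fderiv ℝ f p‖ ≤ s) →
    ∀ p ∈ cthickening ρ (G.J v), ∀ q ∈ cthickening ρ (G.J v), dist (f p) (f q) ≤ s * L

theorem exists_oscBound [Finite V] : ∃ ρ > 0, (∀ v, cthickening ρ (G.J v) ⊆ G.O v) ∧
    ∃ L ≥ 0, G.OscBound ρ L := by
  obtain ⟨c, hc, h⟩ := G.hJO
  have hsub : ∀ v, cthickening (c / 2) (G.J v) ⊆ G.O v := by
    intro v p hp
    rw [(G.J_cpt v).cthickening_eq_biUnion_closedBall (by positivity)] at hp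
    obtain ⟨x, hx, hpx⟩ := mem_iUnion₂.1 hp
    by_contra hcon
    have := h v x hx p hcon
    rw [mem_closedBall, dist_comm] at hpx
    linarith
  refine ⟨c / 2, by positivity, hsub, ?_⟩
  choose L hL0 hL using fun v => exists_oscillation_bound (G.O_open v) (G.O_conn v)
    (G.J_cpt v).cthickening (hsub v)
  obtain ⟨M, hM⟩ := Set.finite_range L |>.bddAbove
  refine ⟨max M 0, le_max_right _ _, fun v f s hs hd hn p hp q hq => ?_⟩
  exact (hL v f s hs hd hn p hp q hq).trans
    (mul_le_mul_of_nonneg_left ((hM ⟨v, rfl⟩).trans (le_max_left _ _)) hs)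

variable {G}

theorem PathOn.dist_le {R ρ L : ℝ} (hR0 : 0 ≤ R) (hR : G.r ≤ R) (hL : G.OscBound ρ L)
    {w : ℕ → V} {j m : ℕ} (h : G.PathOn w j m) {p q : Pt D}
    (hp : p ∈ cthickening ρ (G.J (w (j + m)))) (hq : q ∈ cthickening ρ (G.J (w (j + m)))) :
    dist (pcomp G.T w j m p) (pcomp G.T w j m q) ≤ R ^ m * L :=
  hL _ _ _ (pow_nonneg hR0 m) (fun _ hx => h.differentiableAt hx)
    (h.norm_fderiv_le hR0 hR) p hp q hq

/-- Step-by-step distortion estimate; the factors are summable perturbations of `1` because the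
orbits of `p` and `z` approach each other geometrically. -/
theorem PathOn.iprod_le_prod_mul {R ρ L c β : ℝ} (hR0 : 0 ≤ R) (hR : G.r ≤ R)
    (hL : G.OscBound ρ L) (hsub : ∀ v, cthickening ρ (G.J v) ⊆ G.O v) (hc : 0 ≤ c) (hL0 : 0 ≤ L)
    (hβ : 0 ≤ β)
    (hBD : ∀ ⦃v u⦄, G.E v u → ∀ x ∈ G.O u, ∀ y ∈ G.O u,
      |inorm (fderiv ℝ (G.T v u) x) - inorm (fderiv ℝ (G.T v u) y)| ≤
        c * inorm (fderiv ℝ (G.T v u) x) * dist x y ^ β)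
    {w : ℕ → V} {m : ℕ} : ∀ {j : ℕ}, G.PathOn w j m →
    ∀ p ∈ cthickening ρ (G.J (w (j + m))), ∀ z ∈ cthickening ρ (G.J (w (j + m))),
      iprod G.T w j m z ≤
        (∏ i ∈ Finset.range m, (1 + c * (R ^ i * L) ^ β)) * iprod G.T w j m p := by
  have hnn : ∀ (m j : ℕ) (q : Pt D), 0 ≤ iprod G.T w j m q := by
    intro m
    induction m with
    | zero => intro j q; exact zero_le_one
    | succ m ih => intro j q; exact mul_nonneg (inorm_nonneg _) (ih _ _)
  induction m with
  | zero => intro j _ p _ z _; simp [iprod]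
  | succ m ih =>
    intro j h p hp z hz
    rw [show j + (m + 1) = j + 1 + m by omega] at hp hz
    have hd := h.tail.dist_le hR0 hR hL hp hz
    have hb := hBD h.head _ (h.tail.mapsTo_O (hsub _ hp)) _ (h.tail.mapsTo_O (hsub _ hz))
    set a := inorm (fderiv ℝ (G.T (w j) (w (j + 1))) (pcomp G.T w (j + 1) m p)) with ha
    have ha0 : 0 ≤ a := inorm_nonneg _
    have hpow : dist (pcomp G.T w (j + 1) m p) (pcomp G.T w (j + 1) m z) ^ β ≤
        (R ^ m * L) ^ β := Real.rpow_le_rpow dist_nonneg hd hβ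
    have h1 : inorm (fderiv ℝ (G.T (w j) (w (j + 1))) (pcomp G.T w (j + 1) m z)) ≤
        (1 + c * (R ^ m * L) ^ β) * a := by
      have h2 := (abs_le.1 hb).1
      have h3 : c * a * dist (pcomp G.T w (j + 1) m p) (pcomp G.T w (j + 1) m z) ^ β ≤
        c * a * (R ^ m * L) ^ β := mul_le_mul_of_nonneg_left hpow (by positivity)
      nlinarith
    have h4 := ih h.tail p hp z hz
    rw [Finset.prod_range_succ]
    simp only [iprod]
    rw [← ha]
    calc _ ≤ ((1 + c * (R ^ m * L) ^ β) * a) *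
          ((∏ i ∈ Finset.range m, (1 + c * (R ^ i * L) ^ β)) * iprod G.T w (j + 1) m p) :=
          mul_le_mul h1 h4 (hnn _ _ _) (by positivity)
      _ = _ := by ring

theorem prod_one_add_le_exp {R L c β : ℝ} (hR0 : 0 ≤ R) (hR1 : R < 1) (hL0 : 0 ≤ L)
    (hc : 0 ≤ c) (hβ : 0 < β) (m : ℕ) :
    ∏ i ∈ Finset.range m, (1 + c * (R ^ i * L) ^ β) ≤
      Real.exp (c * L ^ β * (1 - R ^ β)⁻¹) := by
  have hq0 : 0 ≤ R ^ β := Real.rpow_nonneg hR0 β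
  have hq1 : R ^ β < 1 := Real.rpow_lt_one hR0 hR1 hβ
  calc _ ≤ ∏ i ∈ Finset.range m, Real.exp (c * (R ^ i * L) ^ β) :=
        Finset.prod_le_prod (fun i _ => by positivity) fun i _ => by
          rw [add_comm]; exact Real.add_one_le_exp _
    _ = Real.exp (∑ i ∈ Finset.range m, c * (R ^ i * L) ^ β) := (Real.exp_sum _ _).symm
    _ ≤ _ := by
        apply Real.exp_le_exp.2
        have : ∀ i ∈ Finset.range m, c * (R ^ i * L) ^ β = c * L ^ β * (R ^ β) ^ i := by
          intro i _
          rw [Real.mul_rpow (by positivity) hL0, ← Real.rpow_natCast_mul hR0, mul_comm (i : ℝ) β,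
            Real.rpow_mul_natCast hR0]
          ring
        rw [Finset.sum_congr rfl this, ← Finset.mul_sum, ← tsum_geometric_of_lt_one hq0 hq1]
        exact mul_le_mul_of_nonneg_left ((summable_geometric_of_lt_one hq0 hq1).sum_le_tsum _
          fun i _ => by positivity) (by positivity)

end SGIFS

/-! ### The coding map -/

namespace SGIFS

variable {D : ℕ} {V : Type*} {G : SGIFS D V} {π : (ℕ → V) → Pt D}

theorem pathOn_of_mem_TMS {ω : ℕ → V} (hω : ω ∈ TMS G.E) (j m : ℕ) : G.PathOn ω j m :=
  fun i _ => hω (j + i)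

theorem drop_mem_TMS {ω : ℕ → V} (hω : ω ∈ TMS G.E) (n : ℕ) :
    (fun i => ω (n + i)) ∈ TMS G.E := fun i => hω (n + i)

theorem coding_mem (hπ : IsCodingMap G.E G.J G.T π) {ω : ℕ → V} (hω : ω ∈ TMS G.E) (k : ℕ) :
    π ω ∈ pcomp G.T ω 0 (k + 1) '' G.J (ω (k + 1)) := by
  have h : π ω ∈ ⋂ k : ℕ, vcomp G.T ω (k + 1) '' G.J (ω (k + 1)) := by
    rw [hπ ω hω]
    rfl
  have := mem_iInter.1 h k
  rwa [vcomp_eq_pcomp] at this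

theorem coding_mem_J (hπ : IsCodingMap G.E G.J G.T π) {ω : ℕ → V} (hω : ω ∈ TMS G.E) :
    π ω ∈ G.J (ω 0) := by
  obtain ⟨q, hq, hqe⟩ := coding_mem hπ hω 0
  rw [← hqe]
  have h := (pathOn_of_mem_TMS hω 0 (0 + 1)).mapsTo_J
  rw [show 0 + (0 + 1) = 0 + 1 by omega] at h
  exact h hq

theorem coding_step (hπ : IsCodingMap G.E G.J G.T π) {ω : ℕ → V} (hω : ω ∈ TMS G.E) :
    π ω = G.T (ω 0) (ω 1) (π (fun i => ω (1 + i))) := by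
  have hσ := drop_mem_TMS hω 1
  suffices h : G.T (ω 0) (ω 1) (π (fun i => ω (1 + i))) ∈
      ⋂ k : ℕ, vcomp G.T ω (k + 1) '' G.J (ω (k + 1)) by
    rw [hπ ω hω] at h
    exact h.symm
  refine mem_iInter.2 fun k => ?_
  rw [vcomp_eq_pcomp]
  cases k with
  | zero => exact ⟨_, coding_mem_J hπ hσ, rfl⟩
  | succ k =>
    obtain ⟨q, hq, hqe⟩ := coding_mem hπ hσ k
    refine ⟨q, ?_, ?_⟩
    · rwa [show k + 1 + 1 = 1 + (k + 1) by omega]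
    · rw [← hqe, pcomp_congr (w' := ω) (j' := 1) G.T (k + 1)
        (fun i _ => ⟨by congr 1; omega, by congr 1; omega⟩)]
      rfl

theorem coding_eq (hπ : IsCodingMap G.E G.J G.T π) {ω : ℕ → V} (hω : ω ∈ TMS G.E) (n : ℕ) :
    π ω = pcomp G.T ω 0 n (π (fun i => ω (n + i))) := by
  induction n with
  | zero => simp [pcomp]
  | succ n ih =>
    rw [pcomp_add G.T ω n 1 0, ih, coding_step hπ (drop_mem_TMS hω n)]
    simp only [pcomp, Function.comp_apply, id, zero_add, add_zero, add_assoc]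

theorem coding_continuousOn [TopologicalSpace V] [DiscreteTopology V]
    (hπ : IsCodingMap G.E G.J G.T π) {R ρ L : ℝ} (hR0 : 0 ≤ R) (hR1 : R < 1) (hR : G.r ≤ R)
    (hL : G.OscBound ρ L) : ContinuousOn π (TMS G.E) := by
  intro ω hω
  rw [ContinuousWithinAt, Metric.tendsto_nhds]
  intro ε hε
  have hlim : Tendsto (fun n : ℕ => R ^ n * L) atTop (𝓝 0) := by
    simpa using (tendsto_pow_atTop_nhds_zero_of_lt_one hR0 hR1).mul_const L
  obtain ⟨n, hn⟩ := (hlim.eventually (gt_mem_nhds hε)).exists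
  have hag : ∀ᶠ η in 𝓝 ω, ∀ i ∈ Finset.range (n + 1), η i = ω i := by
    rw [Finset.eventually_all]
    intro i _
    have h : {v | v = ω i} ∈ 𝓝 (ω i) := (isOpen_discrete _).mem_nhds rfl
    exact (continuous_apply i).continuousAt.eventually h
  filter_upwards [mem_nhdsWithin_of_mem_nhds hag, self_mem_nhdsWithin] with η hη hηT
  have hη : ∀ i ≤ n, η i = ω i := fun i hi => hη i (Finset.mem_range.2 (by omega))
  rw [coding_eq hπ hω n, coding_eq hπ hηT n, pcomp_congr (w := η) (w' := ω) (j := 0) (j' := 0) G.T n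
    (fun i hi => ⟨hη _ (by omega), hη _ (by omega)⟩)]
  refine lt_of_le_of_lt ((pathOn_of_mem_TMS hω 0 n).dist_le hR0 hR hL ?_ ?_) hn
  · refine self_subset_cthickening _ ?_
    have := coding_mem_J hπ (drop_mem_TMS hηT n)
    rw [zero_add]
    rwa [add_zero, hη n le_rfl] at this
  · refine self_subset_cthickening _ ?_
    have := coding_mem_J hπ (drop_mem_TMS hω n)
    rw [zero_add]
    rwa [add_zero] at this

/-- By compactness of the code space, strong separation is uniform: points of the limit set whose
codes have different first edges are a definite distance apart. -/
theorem exists_separation [Finite V] (hπ : IsCodingMap G.E G.J G.T π)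
    (hSSC : CondSSC G.E G.J G.T (π '' TMS G.E)) {R ρ L : ℝ} (hR0 : 0 ≤ R) (hR1 : R < 1)
    (hR : G.r ≤ R) (hL : G.OscBound ρ L) :
    ∃ δ > 0, ∀ ω ∈ TMS G.E, ∀ η ∈ TMS G.E, (ω 0, ω 1) ≠ (η 0, η 1) → δ ≤ dist (π ω) (π η) := by
  let _ : TopologicalSpace V := ⊥
  have _ : DiscreteTopology V := ⟨rfl⟩
  have hcont := coding_continuousOn hπ hR0 hR1 hR hL
  have hclT : IsClosed (TMS G.E) := by
    have : TMS G.E = ⋂ n : ℕ, (fun ω : ℕ → V => (ω n, ω (n + 1))) ⁻¹' {e | G.E e.1 e.2} := by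
      ext ω
      simp [TMS]
    rw [this]
    exact isClosed_iInter fun n => (isClosed_discrete _).preimage (by fun_prop)
  let S : Set ((ℕ → V) × (ℕ → V)) := (TMS G.E ×ˢ TMS G.E) ∩
    (fun q : (ℕ → V) × (ℕ → V) => ((q.1 0, q.1 1), (q.2 0, q.2 1))) ⁻¹' {e | e.1 ≠ e.2}
  have hS : IsCompact S := by
    refine IsClosed.isCompact ((hclT.prod hclT).inter ?_)
    exact (isClosed_discrete _).preimage (by fun_prop)
  have hd : ContinuousOn (fun q : (ℕ → V) × (ℕ → V) => dist (π q.1) (π q.2)) S := by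
    exact continuous_dist.comp_continuousOn
      ((hcont.comp continuous_fst.continuousOn fun q hq => hq.1.1).prodMk
        (hcont.comp continuous_snd.continuousOn fun q hq => hq.1.2))
  obtain ⟨δ, hδ, h⟩ := hS.exists_forall_le' hd (a := 0) (by
    rintro ⟨ω, η⟩ ⟨⟨hω, hη⟩, hne⟩
    refine dist_pos.2 fun heq => ?_
    have hmem : ∀ ξ ∈ TMS G.E, π ξ ∈ G.T (ξ 0) (ξ 1) '' (G.J (ξ 1) ∩ π '' TMS G.E) := by
      intro ξ hξ
      have hσ := drop_mem_TMS hξ 1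
      exact ⟨_, ⟨coding_mem_J hπ hσ, mem_image_of_mem π hσ⟩, (coding_step hπ hξ).symm⟩
    have hempty := hSSC (hω 0) (hη 0) hne
    have : π ω ∈ (∅ : Set (Pt D)) := by
      rw [← hempty]
      refine ⟨hmem ω hω, ?_⟩
      have heq : π ω = π η := heq
      rw [heq]
      exact hmem η hη
    exact this)
  exact ⟨δ, hδ, fun ω hω η hη hne => h (ω, η) ⟨⟨hω, hη⟩, hne⟩⟩

/-- Prepending a path to an infinite code. -/
theorem exists_concat (hπ : IsCodingMap G.E G.J G.T π) {w : ℕ → V} {N : ℕ}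
    (hw : G.PathOn w 0 N) {ω' : ℕ → V} (hω' : ω' ∈ TMS G.E) (h0 : ω' 0 = w N) :
    ∃ ω ∈ TMS G.E, (∀ i ≤ N, ω i = w i) ∧ π ω = pcomp G.T w 0 N (π ω') := by
  have hag : ∀ i ≤ N, (if i < N then w i else ω' (i - N)) = w i := by
    intro i hi
    split_ifs with h
    · rfl
    · rw [show i = N by omega, Nat.sub_self, h0]
  have hdrop : ∀ i, (if N + i < N then w (N + i) else ω' (N + i - N)) = ω' i := by
    intro i
    rw [if_neg (by omega), Nat.add_sub_cancel_left]
  have hT : (fun i => if i < N then w i else ω' (i - N)) ∈ TMS G.E := by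
    intro i
    by_cases hi : i < N
    · have := hw i hi
      rw [zero_add] at this
      simpa only [hag i hi.le, hag (i + 1) hi] using this
    · obtain ⟨l, rfl⟩ := Nat.exists_eq_add_of_le (not_lt.1 hi)
      simpa only [add_assoc, hdrop] using hω' l
  refine ⟨_, hT, hag, ?_⟩
  rw [coding_eq hπ hT N, pcomp_congr (w' := w) (j' := 0) G.T N
    (fun i hi => ⟨hag _ (by omega), hag _ (by omega)⟩)]
  congr 2
  funext i
  exact hdrop i

end SGIFS

/-- For a finite strongly connected simple GIFS with `(G.6)_S` and
`(G.7)_{BI}`, small balls around points of `T_w(K_{w_k})` meet `K` only inside `T_w(K_{w_k})`. -/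
theorem ball_inter_limit_set_subset
    {D : ℕ} {V : Type*} [Finite V] (G : SGIFS D V)
    (hSC : ∀ v u : V, Chain G.E v u)
    (π : (ℕ → V) → Pt D) (hπ : IsCodingMap G.E G.J G.T π)
    (hSSC : CondSSC G.E G.J G.T (π '' TMS G.E))
    (hBDI : CondBDI G.E G.O G.T) :
    ∃ c > 0, ∀ κ ∈ Set.Ioo (0 : ℝ) 1, ∀ k : ℕ, 2 ≤ k → ∀ w : ℕ → V,
      (∀ i, i + 1 < k → G.E (w i) (w (i + 1))) →
      ∀ z ∈ G.J (w (k - 1)),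
      ∀ x ∈ pcomp G.T w 0 (k - 1) '' (π '' {ω ∈ TMS G.E | ω 0 = w (k - 1)}),
        (π '' TMS G.E) ∩
            Metric.ball x (c * κ * ∏ j ∈ Finset.range (k - 1),
              inorm (fderiv ℝ (G.T (w j) (w (j + 1)))
                (pcomp G.T w (j + 1) (k - 1 - (j + 1)) z))) ⊆
          pcomp G.T w 0 (k - 1) '' (π '' {ω ∈ TMS G.E | ω 0 = w (k - 1)}) := by
  obtain ⟨ρ₀, hρ₀, hsub, L, hL0, hL⟩ := G.exists_oscBound
  obtain ⟨c₀, hc₀, β, ⟨hβ, -⟩, hBD⟩ := hBDI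
  -- `G.r` may be a junk negative number when there are no edges, hence the maximum.
  set R := max G.r 0 with hRdef
  have hR0 : 0 ≤ R := le_max_right _ _
  have hR : G.r ≤ R := le_max_left _ _
  have hR1 : R < 1 := max_lt G.hr one_pos
  obtain ⟨δ, hδ, hsep⟩ := SGIFS.exists_separation hπ hSSC hR0 hR1 hR hL
  set C := Real.exp (c₀ * L ^ β * (1 - R ^ β)⁻¹) with hCdef
  have hC0 : 0 < C := Real.exp_pos _
  have hC1 : 1 ≤ C := by
    have hq1 : R ^ β < 1 := Real.rpow_lt_one hR0 hR1 hβ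
    have : 0 ≤ (1 - R ^ β)⁻¹ := inv_nonneg.2 (by linarith)
    exact Real.one_le_exp (by positivity)
  set ρ := min δ ρ₀ with hρdef
  have hρ : 0 < ρ := lt_min hδ hρ₀
  refine ⟨ρ / C, by positivity, ?_⟩
  rintro κ ⟨hκ0, hκ1⟩ k hk w hw z hz _ ⟨_, ⟨ω', ⟨hω', hω'0⟩, rfl⟩, rfl⟩ y ⟨⟨η, hη, rfl⟩, hball⟩
  -- In dimension `0` all points coincide.
  rcases subsingleton_or_nontrivial (Pt D) with hD | hD
  · exact ⟨π ω', ⟨ω', ⟨hω', hω'0⟩, rfl⟩, Subsingleton.elim _ _⟩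
  obtain ⟨N, rfl⟩ : ∃ N, k = N + 1 := ⟨k - 1, by omega⟩
  simp only [Nat.add_sub_cancel] at *
  have hwN : G.PathOn w 0 N := fun i hi => by rw [zero_add]; exact hw i (by omega)
  obtain ⟨ω, hω, hωw, hωx⟩ := SGIFS.exists_concat hπ hwN hω' hω'0
  have hprod := prod_eq_iprod G.T w z N 0
  simp only [zero_add] at hprod
  rw [hprod, ← hωx] at hball
  by_contra hcon
  -- `m` is the first index at which the edges of the code of `y` and of the word `w` differ.
  have hex : ∃ m, m < N ∧ (ω m, ω (m + 1)) ≠ (η m, η (m + 1)) := by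
    by_contra! hall
    have hall' : ∀ i < N, ω i = η i ∧ ω (i + 1) = η (i + 1) := fun i hi => by
      simpa using hall i hi
    refine hcon ⟨_, ⟨fun i => η (N + i), ⟨SGIFS.drop_mem_TMS hη N, ?_⟩, rfl⟩, ?_⟩
    · have := (hall' (N - 1) (by omega)).2
      rw [show N - 1 + 1 = N by omega] at this
      change η N = w N
      rw [← this, hωw N le_rfl]
    · rw [SGIFS.coding_eq hπ hη N]
      refine congrFun (pcomp_congr G.T N fun i hi => ?_) _
      simp only [zero_add]
      rw [← hωw i hi.le, ← hωw (i + 1) hi]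
      exact hall' i hi
  classical
  obtain ⟨hmN, hmne⟩ := Nat.find_spec hex
  have hmin := fun i (hi : i < Nat.find hex) => Nat.find_min hex hi
  set m := Nat.find hex with hmdef
  have hagree : ∀ i < m, ω i = η i ∧ ω (i + 1) = η (i + 1) := by
    intro i hi
    have := hmin i hi
    push Not at this
    simpa using this (by omega)
  have hωm := SGIFS.drop_mem_TMS hω m
  have hηm := SGIFS.drop_mem_TMS hη m
  have hδm : ρ ≤ dist (π fun i => ω (m + i)) (π fun i => η (m + i)) :=
    (min_le_left _ _).trans (hsep _ hωm _ hηm hmne)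
  -- Split the product at `m`; the second part is at most `1`.
  have hwm : G.PathOn w 0 m := fun i hi => hwN i (by omega)
  have hwr : G.PathOn w m (N - m) := fun i hi => by
    have := hwN (m + i) (by omega)
    rwa [zero_add] at this
  have hzr : z ∈ G.J (w (m + (N - m))) := by rwa [show m + (N - m) = N by omega]
  set z' := pcomp G.T w m (N - m) z with hz'def
  have hz' : z' ∈ G.J (w m) := hwr.mapsTo_J hzr
  have hz'0 : z' ∈ G.J (w (0 + m)) := by rwa [zero_add]
  have hpos : 0 < iprod G.T w 0 m z' := hwm.iprod_pos z' (SGIFS.J_subset_O _ hz'0)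
  have hsplit : iprod G.T w 0 N z ≤ iprod G.T w 0 m z' := by
    have h := iprod_add G.T w z m (N - m) 0
    rw [show m + (N - m) = N by omega, zero_add] at h
    rw [h]
    exact mul_le_of_le_one_right hpos.le (hwr.iprod_le_one z (SGIFS.J_subset_O _ hzr))
  have hup : dist (π ω) (π η) < iprod G.T w 0 m z' / C * ρ := by
    rw [mem_ball, dist_comm] at hball
    refine hball.trans_le ?_
    have hq : 0 ≤ ρ / C := by positivity
    calc ρ / C * κ * iprod G.T w 0 N z ≤ ρ / C * κ * iprod G.T w 0 m z' := by gcongr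
      _ ≤ ρ / C * 1 * iprod G.T w 0 m z' := by gcongr
      _ = iprod G.T w 0 m z' / C * ρ := by ring
  rcases Nat.eq_zero_or_pos m with hm0 | hm0
  -- For `m = 0` the points `x` and `y` are already separated by their first edges.
  · have h1 : iprod G.T w 0 m z' = 1 := by rw [hm0]; rfl
    rw [h1] at hup
    simp only [hm0, zero_add] at hδm
    have h2 : 1 / C * ρ ≤ ρ := mul_le_of_le_one_left hρ.le (by rw [div_le_one hC0]; exact hC1)
    linarith
  · have hηm0 : η m = w m := by
      have := (hagree (m - 1) (by omega)).2
      rw [show m - 1 + 1 = m by omega] at this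
      rw [← this, hωw m hmN.le]
    have hxJ : (π fun i => ω (m + i)) ∈ G.J (w (0 + m)) := by
      have := SGIFS.coding_mem_J hπ hωm
      rw [zero_add]
      rwa [add_zero, hωw m hmN.le] at this
    have hyJ : (π fun i => η (m + i)) ∈ G.J (w (0 + m)) := by
      have := SGIFS.coding_mem_J hπ hηm
      rw [zero_add]
      rwa [add_zero, hηm0] at this
    have hcb : closedBall (π fun i => ω (m + i)) ρ ⊆ cthickening ρ₀ (G.J (w (0 + m))) :=
      (closedBall_subset_closedBall (min_le_right _ _)).trans
        (closedBall_subset_cthickening hxJ ρ₀)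
    have hexp : ∀ p ∈ closedBall (π fun i => ω (m + i)) ρ, ∀ v,
        iprod G.T w 0 m z' / C * ‖v‖ ≤ ‖fderiv ℝ (pcomp G.T w 0 m) p v‖ := by
      intro p hp v
      have hpO := hsub _ (hcb hp)
      refine le_trans ?_ (hwm.iprod_mul_norm_le p hpO v)
      refine mul_le_mul_of_nonneg_right ?_ (norm_nonneg v)
      rw [div_le_iff₀ hC0, mul_comm _ C]
      refine (hwm.iprod_le_prod_mul hR0 hR hL hsub hc₀.le hL0 hβ.le hBD p (hcb hp) z'
        (self_subset_cthickening _ hz'0)).trans ?_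
      exact mul_le_mul_of_nonneg_right (SGIFS.prod_one_add_le_exp hR0 hR1 hL0 hc₀.le hβ m)
        (hwm.iprod_pos p hpO).le
    have hmain := le_dist_of_expanding (G.O_open _) hwm.contDiffOn hwm.injOn hρ
      (div_pos hpos hC0) (hcb.trans (hsub _)) hwm.isUnit_fderiv hexp
      (SGIFS.J_subset_O _ hyJ) hδm
    have hx : π ω = pcomp G.T w 0 m (π fun i => ω (m + i)) := by
      rw [SGIFS.coding_eq hπ hω m]
      refine congrFun (pcomp_congr G.T m fun i hi => ?_) _
      simp only [zero_add]
      exact ⟨hωw i (by omega), hωw (i + 1) (by omega)⟩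
    have hy : π η = pcomp G.T w 0 m (π fun i => η (m + i)) := by
      rw [SGIFS.coding_eq hπ hη m]
      refine congrFun (pcomp_congr G.T m fun i hi => ?_) _
      simp only [zero_add]
      rw [← hωw i (by omega), ← hωw (i + 1) (by omega)]
      exact ⟨(hagree i hi).1.symm, (hagree i hi).2.symm⟩
    rw [← hx, ← hy] at hmain
    linarith
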